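/- Let Θ ⊆ ℝ^p be a convex set and f : ℝ^p → ℝ be μ-strongly convex (μ > 0) with minimizer θ* over Θ and f* := f(θ*). Consider the accelerated scheme: θ₀ ∈ Θ, κ₀ := θ₀, a₀ := 1; for n ≥ 1, a_n ≥ 0 satisfies a_n² = (1 − a_n)a_{n−1}² + (μ/(L+μ))a_n; g_n is a first-order surrogate in S_{L,L+μ}(f,κ_{n−1}); θ_n is the minimizer of g_n over Θ; β_n := a_{n−1}(1 − a_{n−1})/(a_{n−1}² + a_n); and κ_n := θ_n + β_n(θ_n − θ_{n−1}). Then for all n ≥ 1: f(θ_n) − f* ≤ (1 − √(μ/(L+μ)))^{n−1} · L‖θ₀ − θ*‖₂²/2. -/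

import Mathlib

/-!
The proof is a one-step Lyapunov argument. Write `q = μ / (L + μ)`.

Each surrogate step satisfies, for every `θ ∈ Θ`,
`f θₙ + (L+μ)/2 ‖θ - θₙ‖² ≤ f θ + L/2 ‖θ - κₙ₋₁‖²` (`IsFirstOrderSurrogate.step`): the left side is
controlled by quadratic growth of the strongly convex surrogate around its minimizer, and the right
side by the descent lemma applied to the approximation error `g - f`. Neither estimate requires
`κₙ₋₁ ∈ Θ`, nor differentiability of `f`.

Taking `θ = (1 - aₙ₋₁) θₙ₋₁ + aₙ₋₁ θ⋆` and using strong convexity of `f` on this segment, the potential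
`Vₙ = f θₙ - f θ⋆ + (L+μ)/2 ‖θₙ - (1 - aₙ₋₁) θₙ₋₁ - aₙ₋₁ θ⋆‖²` satisfies `Vₙ₊₁ ≤ (1 - aₙ) Vₙ`, because
the extrapolation coefficient `βₙ` is exactly the one for which the leftover term
`L/2 ‖(1 - aₙ) θₙ + aₙ θ⋆ - κₙ‖²` is absorbed (`extrapolation_bound`). As `a₀ = 1`, the first step gives
`V₁ ≤ L/2 ‖θ₀ - θ⋆‖²`, and the recursion for `aₙ` keeps `√q ≤ aₙ ≤ 1`, whence the linear rate.
-/

/-- `g` is a first-order surrogate of `f` near `κ` on `Θ` with constant `L`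
(the class `S_L(f,κ)`); the point `κ` need not belong to `Θ`. -/
def IsFirstOrderSurrogate {E : Type*} [NormedAddCommGroup E] [InnerProductSpace ℝ E]
    [CompleteSpace E] (Θ : Set E) (L : ℝ) (f g : E → ℝ) (κ : E) : Prop :=
  (∀ θ' ∈ Θ, (∀ θ ∈ Θ, g θ' ≤ g θ) → f θ' ≤ g θ') ∧
  Differentiable ℝ (fun θ => g θ - f θ) ∧
  (∀ x y : E, ‖gradient (fun θ => g θ - f θ) x - gradient (fun θ => g θ - f θ) y‖ ≤ L * ‖x - y‖) ∧
  g κ - f κ = 0 ∧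
  gradient (fun θ => g θ - f θ) κ = 0

/-- `g` is `ρ`-strongly convex: `θ ↦ g θ - (ρ/2)‖θ‖²` is convex. -/
def StronglyConvex {E : Type*} [NormedAddCommGroup E] [InnerProductSpace ℝ E]
    (ρ : ℝ) (g : E → ℝ) : Prop :=
  ConvexOn ℝ Set.univ (fun θ => g θ - ρ / 2 * ‖θ‖ ^ 2)

section Helpers

variable {E : Type*} [NormedAddCommGroup E] [InnerProductSpace ℝ E]

/-- Descent lemma at a critical point `κ` where `h` vanishes. -/
lemma descent_of_lipschitz_gradient [CompleteSpace E] {h : E → ℝ} {L : ℝ} {κ : E}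
    (hd : Differentiable ℝ h)
    (hlip : ∀ x y : E, ‖gradient h x - gradient h y‖ ≤ L * ‖x - y‖)
    (h0 : h κ = 0) (hg : gradient h κ = 0) (x : E) :
    h x ≤ L / 2 * ‖x - κ‖ ^ 2 := by
  set d := x - κ with hdd
  -- `L/2 t² ‖d‖² - h (κ + t d)` vanishes at `t = 0` and is nondecreasing on `[0, 1]`.
  have hder : ∀ t : ℝ, HasDerivAt (fun t : ℝ => L / 2 * t ^ 2 * ‖d‖ ^ 2 - h (κ + t • d))
      (L * t * ‖d‖ ^ 2 - inner ℝ (gradient h (κ + t • d)) d) t := by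
    intro t
    have h1 : HasDerivAt (fun t : ℝ => κ + t • d) d t := by
      simpa using ((hasDerivAt_id t).smul_const d).const_add κ
    have h2 : HasDerivAt (fun t : ℝ => h (κ + t • d)) (fderiv ℝ h (κ + t • d) d) t :=
      (hd (κ + t • d)).hasFDerivAt.comp_hasDerivAt t h1
    have h3 : HasDerivAt (fun t : ℝ => L / 2 * t ^ 2 * ‖d‖ ^ 2) (L * t * ‖d‖ ^ 2) t := by
      have := ((hasDerivAt_pow 2 t).const_mul (L / 2)).mul_const (‖d‖ ^ 2)
      exact this.congr_deriv (by push_cast; ring)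
    rw [inner_gradient_left]
    exact h3.sub h2
  have hmono : MonotoneOn (fun t : ℝ => L / 2 * t ^ 2 * ‖d‖ ^ 2 - h (κ + t • d))
      (Set.Icc 0 1) := by
    refine monotoneOn_of_deriv_nonneg (convex_Icc 0 1)
      (fun t _ => (hder t).continuousAt.continuousWithinAt)
      (fun t _ => (hder t).differentiableAt.differentiableWithinAt) fun t ht => ?_
    rw [interior_Icc] at ht
    rw [(hder t).deriv]
    have hn : ‖gradient h (κ + t • d)‖ ≤ L * (t * ‖d‖) := by
      simpa [hg, norm_smul, abs_of_pos ht.1] using hlip (κ + t • d) κ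
    have hi := real_inner_le_norm (gradient h (κ + t • d)) d
    have := mul_le_mul_of_nonneg_right hn (norm_nonneg d)
    nlinarith
  have := hmono (Set.left_mem_Icc.2 zero_le_one) (Set.right_mem_Icc.2 zero_le_one) zero_le_one
  simp [h0, hdd] at this
  exact this

lemma StronglyConvex.strongConvexOn {ρ : ℝ} {g : E → ℝ} (hg : StronglyConvex ρ g) :
    StrongConvexOn Set.univ ρ g :=
  strongConvexOn_iff_convex.2 hg

/-- Quadratic growth of a strongly convex function around a minimizer over a convex set. -/
lemma StronglyConvex.quadratic_growth {ρ : ℝ} {g : E → ℝ} {Θ : Set E}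
    (hg : StronglyConvex ρ g) (hΘ : Convex ℝ Θ) {x y : E} (hx : x ∈ Θ)
    (hmin : ∀ θ ∈ Θ, g x ≤ g θ) (hy : y ∈ Θ) :
    g x + ρ / 2 * ‖y - x‖ ^ 2 ≤ g y := by
  -- Compare `x` with the points `(1 - t) x + t y`, divide by `t` and let `t → 0⁺`.
  have key : ∀ t ∈ Set.Ioo (0 : ℝ) 1, g x + (1 - t) * (ρ / 2 * ‖y - x‖ ^ 2) ≤ g y := by
    intro t ht
    have h1 := hg.strongConvexOn.2 (Set.mem_univ x) (Set.mem_univ y)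
      (sub_nonneg.2 ht.2.le) ht.1.le (sub_add_cancel 1 t)
    have h2 := hmin _ (hΘ hx hy (sub_nonneg.2 ht.2.le) ht.1.le (sub_add_cancel 1 t))
    simp only [smul_eq_mul, norm_sub_rev x y] at h1
    have h3 : t * (g x + (1 - t) * (ρ / 2 * ‖y - x‖ ^ 2)) ≤ t * g y := by linarith
    exact le_of_mul_le_mul_left h3 ht.1
  have hlim : Filter.Tendsto (fun t : ℝ => g x + (1 - t) * (ρ / 2 * ‖y - x‖ ^ 2))
      (nhdsWithin 0 (Set.Ioi 0)) (nhds (g x + (1 - 0) * (ρ / 2 * ‖y - x‖ ^ 2))) :=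
    (Continuous.tendsto (by fun_prop) 0).mono_left nhdsWithin_le_nhds
  have := le_of_tendsto hlim
    (Filter.eventually_of_mem (Ioo_mem_nhdsGT zero_lt_one) key)
  simpa using this

/-- The basic inequality for one surrogate minimization step. -/
lemma IsFirstOrderSurrogate.step [CompleteSpace E] {Θ : Set E} (hΘ : Convex ℝ Θ) {L ρ : ℝ}
    {f g : E → ℝ} {κ x θ : E} (hs : IsFirstOrderSurrogate Θ L f g κ) (hg : StronglyConvex ρ g)
    (hx : x ∈ Θ) (hmin : ∀ θ ∈ Θ, g x ≤ g θ) (hθ : θ ∈ Θ) :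
    f x + ρ / 2 * ‖θ - x‖ ^ 2 ≤ f θ + L / 2 * ‖θ - κ‖ ^ 2 := by
  obtain ⟨hmaj, hd, hlip, h0, hgrad⟩ := hs
  have h1 := hmaj x hx hmin
  have h2 := hg.quadratic_growth hΘ hx hmin hθ
  have h3 := descent_of_lipschitz_gradient hd hlip h0 hgrad θ
  linarith

/-- The choice of the extrapolation coefficient: with `q = μ/(L+μ)`, `D = α² + b`, `x = θ - s` and
`u = θ - (1-α) θ' - α s`, the extrapolated point `κ` satisfies
`κ - ((1-b) θ + b s) = (q b / D) x + (α / D) u`, and the bound differs from an equality by a multiple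
of `‖α x - u‖²`. -/
lemma extrapolation_bound {L μ α b : ℝ} (hL : 0 < L) (hμ : 0 < μ) (hb : 0 < b)
    (hrec : b ^ 2 = (1 - b) * α ^ 2 + μ / (L + μ) * b) (θ θ' s : E) :
    L / 2 * ‖((1 - b) • θ + b • s) -
        (θ + (α * (1 - α) / (α ^ 2 + b)) • (θ - θ'))‖ ^ 2 ≤
      μ / 2 * (b * (1 - b)) * ‖θ - s‖ ^ 2 +
        (1 - b) * ((L + μ) / 2 * ‖θ - ((1 - α) • θ' + α • s)‖ ^ 2) := by
  set x := θ - s with hx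
  set u := θ - ((1 - α) • θ' + α • s) with hu
  set q := μ / (L + μ) with hq
  set D := α ^ 2 + b with hD
  have hLμ : 0 < L + μ := by positivity
  have hD0 : 0 < D := by positivity
  have hq0 : 0 < q := by positivity
  have hqμ : q * (L + μ) = μ := by rw [hq]; field_simp
  have hbD : b * D - α ^ 2 = q * b := by rw [hD]; linarith
  have hvec : ((1 - b) • θ + b • s) - (θ + (α * (1 - α) / D) • (θ - θ')) =
      -((q * b / D) • x + (α / D) • u) := by
    have e : q * b / D = b - α ^ 2 / D := by rw [← hbD]; field_simp
    rw [e, hx, hu]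
    module
  have hfac : L * b = (L + μ) * ((1 - b) * D) := by
    have : (1 - b) * D = b - q * b := by rw [hD]; linarith
    rw [this]
    linear_combination b * hqμ
  have hB : L * (b / D) = (1 - b) * (L + μ) := by
    field_simp
    linarith
  have hA : L * (q * b ^ 2 / D) = μ * (b * (1 - b)) := by
    linear_combination (q * b) * hB + (b * (1 - b)) * hqμ
  have hid : q * b ^ 2 / D * ‖x‖ ^ 2 + b / D * ‖u‖ ^ 2 - ‖(q * b / D) • x + (α / D) • u‖ ^ 2 =
      q * b / D ^ 2 * ‖α • x - u‖ ^ 2 := by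
    rw [norm_add_sq_real, norm_sub_sq_real (α • x) u]
    simp only [norm_smul, mul_pow, Real.norm_eq_abs, sq_abs, inner_smul_left, inner_smul_right,
      RCLike.conj_to_real]
    field_simp
    linear_combination (q * b * ‖x‖ ^ 2 + ‖u‖ ^ 2) * hbD
  have hpos : 0 ≤ q * b / D ^ 2 * ‖α • x - u‖ ^ 2 := by positivity
  rw [hvec, norm_neg]
  have h1 : L / 2 * ‖(q * b / D) • x + (α / D) • u‖ ^ 2 ≤
      L / 2 * (q * b ^ 2 / D * ‖x‖ ^ 2 + b / D * ‖u‖ ^ 2) := by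
    gcongr
    linarith
  linear_combination h1 + ‖x‖ ^ 2 / 2 * hA + ‖u‖ ^ 2 / 2 * hB

/-- The recursion `b² = (1-b) α² + q b` preserves the interval `[√q, 1]`. -/
lemma momentum_mem_Icc {q α b : ℝ} (hq0 : 0 < q) (hq1 : q < 1) (hα : √q ≤ α)
    (hb : 0 ≤ b) (hrec : b ^ 2 = (1 - b) * α ^ 2 + q * b) : √q ≤ b ∧ b ≤ 1 := by
  have hα2 : q ≤ α ^ 2 := (Real.sqrt_le_left (le_trans (Real.sqrt_nonneg q) hα)).1 hα
  have hb1 : b ≤ 1 := by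
    by_contra! h
    nlinarith [mul_nonneg (sub_pos.2 h).le (sq_nonneg α),
      mul_lt_mul_of_pos_right hq1 (zero_lt_one.trans h)]
  refine ⟨(Real.sqrt_le_left hb).2 ?_, hb1⟩
  nlinarith [mul_le_mul_of_nonneg_left hα2 (sub_nonneg.2 hb1)]

end Helpers

/-- Strongly convex analysis of the accelerated scheme with surrogates in
`S_{L,L+μ}(f, κ_{n-1})`: linear convergence with rate `1 - √(μ/(L+μ))`. -/
theorem stmt10 {p : ℕ} (Θ : Set (EuclideanSpace ℝ (Fin p))) (hΘ : Convex ℝ Θ)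
    (f : EuclideanSpace ℝ (Fin p) → ℝ) (μ : ℝ) (hμ : 0 < μ)
    (hscf : StronglyConvex μ f)
    (θstar : EuclideanSpace ℝ (Fin p)) (hθstarΘ : θstar ∈ Θ)
    (hminf : ∀ θ ∈ Θ, f θstar ≤ f θ)
    (L : ℝ) (hL : 0 < L)
    (θs κs : ℕ → EuclideanSpace ℝ (Fin p)) (a : ℕ → ℝ)
    (gs : ℕ → EuclideanSpace ℝ (Fin p) → ℝ)
    (hθ0 : θs 0 ∈ Θ) (hκ0 : κs 0 = θs 0) (ha0 : a 0 = 1)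
    (ha : ∀ n : ℕ, 0 ≤ a (n + 1) ∧
      (a (n + 1)) ^ 2 = (1 - a (n + 1)) * (a n) ^ 2 + μ / (L + μ) * a (n + 1))
    (hsur : ∀ n : ℕ, IsFirstOrderSurrogate Θ L f (gs (n + 1)) (κs n))
    (hsc : ∀ n : ℕ, StronglyConvex (L + μ) (gs (n + 1)))
    (hmin : ∀ n : ℕ, θs (n + 1) ∈ Θ ∧ ∀ θ ∈ Θ, gs (n + 1) (θs (n + 1)) ≤ gs (n + 1) θ)
    (hκ : ∀ n : ℕ, κs (n + 1) = θs (n + 1) +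
      (a n * (1 - a n) / ((a n) ^ 2 + a (n + 1))) • (θs (n + 1) - θs n)) :
    ∀ n : ℕ, 1 ≤ n →
      f (θs n) - f θstar ≤
        (1 - Real.sqrt (μ / (L + μ))) ^ (n - 1) * (L * ‖θs 0 - θstar‖ ^ 2 / 2) := by
  have hLμ : 0 < L + μ := by positivity
  set q := μ / (L + μ) with hq
  have hq0 : 0 < q := by positivity
  have hq1 : q < 1 := by rw [hq, div_lt_one hLμ]; linarith
  have hsq1 : √q ≤ 1 := Real.sqrt_le_one.2 hq1.le
  have hsq0 : 0 < √q := Real.sqrt_pos.2 hq0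
  have hmem : ∀ n, √q ≤ a n ∧ a n ≤ 1 := by
    intro n
    induction n with
    | zero => simpa [ha0] using hsq1
    | succ n ih => exact momentum_mem_Icc hq0 hq1 ih.1 (ha n).1 (ha n).2
  have hΘs : ∀ n, θs n ∈ Θ := fun n => by
    cases n with
    | zero => exact hθ0
    | succ n => exact (hmin n).1
  set V : ℕ → ℝ := fun n => f (θs (n + 1)) - f θstar +
    (L + μ) / 2 * ‖θs (n + 1) - ((1 - a n) • θs n + a n • θstar)‖ ^ 2 with hV
  have hVle : ∀ n, f (θs (n + 1)) - f θstar ≤ V n := fun n =>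
    le_add_of_nonneg_right (by positivity)
  have hV0 : ∀ n, 0 ≤ V n := fun n =>
    (sub_nonneg.2 (hminf _ (hΘs (n + 1)))).trans (hVle n)
  have hstep : ∀ n, ∀ θ ∈ Θ, f (θs (n + 1)) + (L + μ) / 2 * ‖θs (n + 1) - θ‖ ^ 2 ≤
      f θ + L / 2 * ‖θ - κs n‖ ^ 2 := fun n θ hθ => by
    rw [norm_sub_rev]
    exact (hsur n).step hΘ (hsc n) (hmin n).1 (hmin n).2 hθ
  have hbase : V 0 ≤ L * ‖θs 0 - θstar‖ ^ 2 / 2 := by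
    have h := hstep 0 θstar hθstarΘ
    rw [hκ0, norm_sub_rev θstar] at h
    simp only [hV, ha0, sub_self, zero_smul, one_smul, zero_add] at h ⊢
    linarith
  have hcontr : ∀ n, V (n + 1) ≤ (1 - a (n + 1)) * V n := by
    intro n
    obtain ⟨hlo, hhi⟩ := hmem (n + 1)
    have hb : 0 < a (n + 1) := hsq0.trans_le hlo
    have h1 := hstep (n + 1) ((1 - a (n + 1)) • θs (n + 1) + a (n + 1) • θstar)
      (hΘ (hΘs (n + 1)) hθstarΘ (sub_nonneg.2 hhi) hb.le (sub_add_cancel _ _))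
    have h2 := hscf.strongConvexOn.2 (Set.mem_univ (θs (n + 1))) (Set.mem_univ θstar)
      (sub_nonneg.2 hhi) hb.le (sub_add_cancel _ _)
    have h3 := extrapolation_bound hL hμ hb (ha n).2 (θs (n + 1)) (θs n) θstar
    rw [hκ n] at h1
    simp only [smul_eq_mul] at h2
    simp only [hV]
    linarith
  have hrate : ∀ n, V n ≤ (1 - √q) ^ n * (L * ‖θs 0 - θstar‖ ^ 2 / 2) := by
    intro n
    induction n with
    | zero => simpa using hbase
    | succ n ih =>
      calc V (n + 1) ≤ (1 - a (n + 1)) * V n := hcontr n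
        _ ≤ (1 - √q) * V n :=
          mul_le_mul_of_nonneg_right (sub_le_sub_left (hmem (n + 1)).1 1) (hV0 n)
        _ ≤ (1 - √q) * ((1 - √q) ^ n * (L * ‖θs 0 - θstar‖ ^ 2 / 2)) :=
          mul_le_mul_of_nonneg_left ih (sub_nonneg.2 hsq1)
        _ = _ := by ring
  intro n hn
  obtain ⟨m, rfl⟩ := Nat.exists_eq_add_of_le' hn
  exact (hVle m).trans (hrate m)
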